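/- Let n ≥ 2 and let p : {1,…,n} × {1,…,n} → ℝ satisfy p_ii = 0, p_ij = p_ji, p_ij ≥ 0, and Σ_{i≠j} p_ij = 1 (sums over ordered pairs of distinct indices). For X = (X_1,…,X_n) ∈ (ℝ^d)^n define w_ij = (1 + ‖X_i − X_j‖²)^{-1} for i ≠ j, Z = Σ_{k≠l} w_kl, and q_ij = w_ij/Z. Then, with the convention 0·log 0 = 0, the function X ↦ KL(X) = Σ_{i≠j} p_ij log(p_ij/q_ij) is differentiable, and for every index m its partial gradient with respect to X_m equals 4·( Σ_{j≠m} p_mj·q_mj·Z·(X_m − X_j) − Σ_{j≠m} q_mj²·Z·(X_m − X_j) ), i.e. 4 Σ_{j≠m} (p_mj − q_mj)·q_mj·Z·(X_m − X_j). -/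

import Mathlib

open Finset

/-- The t-SNE normalization term `Z(X) = Σ_{k≠l} (1 + ‖X k − X l‖²)⁻¹`. -/
noncomputable def tsneZ {d n : ℕ} (X : Fin n → EuclideanSpace ℝ (Fin d)) : ℝ :=
  ∑ k, ∑ l ∈ Finset.univ.erase k, (1 + ‖X k - X l‖ ^ 2)⁻¹

/-- The low-dimensional probability `q i j = (1 + ‖X i − X j‖²)⁻¹ / Z(X)`. -/
noncomputable def tsneQ {d n : ℕ} (X : Fin n → EuclideanSpace ℝ (Fin d)) (i j : Fin n) : ℝ :=
  (1 + ‖X i - X j‖ ^ 2)⁻¹ / tsneZ X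


theorem tsneZ_pos' {d n : ℕ} (hn : 2 ≤ n) (X : Fin n → EuclideanSpace ℝ (Fin d)) : 0 < tsneZ X := by
  unfold tsneZ
  apply Finset.sum_pos
  · intro i _
    apply Finset.sum_pos
    · intro j _
      positivity
    · rw [← Finset.card_pos, Finset.card_erase_of_mem (Finset.mem_univ i)]
      simp
      omega
  · exact ⟨⟨0, by omega⟩, Finset.mem_univ _⟩

/-- derivative of the squared distance -/
noncomputable def dD {d n : ℕ} (X : Fin n → EuclideanSpace ℝ (Fin d)) (i j : Fin n) :
    (Fin n → EuclideanSpace ℝ (Fin d)) →L[ℝ] ℝ :=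
  2 • (innerSL ℝ (X i - X j)).comp
    ((ContinuousLinearMap.proj (R := ℝ) (φ := fun _ : Fin n => EuclideanSpace ℝ (Fin d)) i)
      - ContinuousLinearMap.proj (R := ℝ) (φ := fun _ : Fin n => EuclideanSpace ℝ (Fin d)) j)

theorem dD_apply {d n : ℕ} (X h : Fin n → EuclideanSpace ℝ (Fin d)) (i j : Fin n) :
    dD X i j h = 2 * inner ℝ (X i - X j) (h i - h j) := by
  simp [dD, inner_sub_left, inner_sub_right]
  try ring

theorem hasFDerivAt_D {d n : ℕ} (X : Fin n → EuclideanSpace ℝ (Fin d)) (i j : Fin n) :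
    HasFDerivAt (fun Y : Fin n → EuclideanSpace ℝ (Fin d) => 1 + ‖Y i - Y j‖ ^ 2) (dD X i j) X := by
  have h1 : HasFDerivAt (fun Y : Fin n → EuclideanSpace ℝ (Fin d) => Y i - Y j)
    ((ContinuousLinearMap.proj (R := ℝ) (φ := fun _ : Fin n => EuclideanSpace ℝ (Fin d)) i)
      - ContinuousLinearMap.proj (R := ℝ) (φ := fun _ : Fin n => EuclideanSpace ℝ (Fin d)) j) X :=
    (hasFDerivAt_apply i X).sub (hasFDerivAt_apply j X)
  exact (h1.norm_sq).const_add 1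

theorem hasFDerivAt_Z {d n : ℕ} (X : Fin n → EuclideanSpace ℝ (Fin d)) :
    HasFDerivAt (fun Y : Fin n → EuclideanSpace ℝ (Fin d) => tsneZ Y)
      (∑ i, ∑ j ∈ univ.erase i, (-((1 + ‖X i - X j‖ ^ 2) ^ 2)⁻¹) • dD X i j) X := by
  unfold tsneZ
  refine HasFDerivAt.fun_sum fun i _ => HasFDerivAt.fun_sum fun j _ => ?_
  exact (hasDerivAt_inv (by positivity)).comp_hasFDerivAt X (hasFDerivAt_D X i j)

theorem symm_sum {d n : ℕ} (c : Fin n → Fin n → ℝ) (hc : ∀ i j, c i j = c j i)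
    (X : Fin n → EuclideanSpace ℝ (Fin d)) (m : Fin n) (v : EuclideanSpace ℝ (Fin d)) :
    ∑ i, ∑ j ∈ univ.erase i, c i j * dD X i j (Pi.single m v)
      = inner ℝ ((4 : ℝ) • ∑ j ∈ univ.erase m, c m j • (X m - X j)) v := by
  have e1 : ∀ i, ∑ j ∈ univ.erase i, c i j * dD X i j (Pi.single m v)
      = ∑ j, c i j * dD X i j (Pi.single m v) := fun i =>
    Finset.sum_erase _ (by simp [dD_apply])
  have e2 : ∑ j ∈ univ.erase m, c m j • (X m - X j) = ∑ j, c m j • (X m - X j) :=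
    Finset.sum_erase _ (by simp)
  simp_rw [e1]
  rw [e2]
  set h : Fin n → EuclideanSpace ℝ (Fin d) := Pi.single m v with hh
  set F : Fin n → Fin n → ℝ := fun i j => c i j * inner ℝ (X i - X j) (h i) with hF
  have e3 : ∀ i j, c i j * dD X i j h = 2 * F i j + 2 * F j i := by
    intro i j
    simp only [hF, dD_apply]
    rw [hc j i, ← neg_sub (X i) (X j), inner_neg_left, inner_sub_right]
    ring
  have e4 : ∑ i, ∑ j, F j i = ∑ i, ∑ j, F i j := Finset.sum_comm
  have e5 : ∑ i, ∑ j, F i j = ∑ j, F m j := by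
    apply Finset.sum_eq_single m
    · intro i _ him
      simp [hF, hh, Pi.single_eq_of_ne him]
    · simp
  simp_rw [e3, Finset.sum_add_distrib, ← Finset.mul_sum]
  rw [e4, e5, inner_smul_left, sum_inner]
  simp only [hF, hh, Pi.single_eq_same, inner_smul_left]
  simp
  ring

theorem KL_eq {d n : ℕ} (hn : 2 ≤ n) (p : Fin n → Fin n → ℝ)
    (hsum : ∑ i, ∑ j ∈ univ.erase i, p i j = 1) (Y : Fin n → EuclideanSpace ℝ (Fin d)) :
    ∑ i, ∑ j ∈ univ.erase i, p i j * Real.log (p i j / tsneQ Y i j)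
      = (∑ i, ∑ j ∈ univ.erase i, p i j * Real.log (p i j)) +
        (∑ i, ∑ j ∈ univ.erase i, p i j * Real.log (1 + ‖Y i - Y j‖ ^ 2))
        + Real.log (tsneZ Y) := by
  have hZ := tsneZ_pos' hn Y
  have : Real.log (tsneZ Y) = ∑ i, ∑ j ∈ univ.erase i, p i j * Real.log (tsneZ Y) := by
    simp_rw [← Finset.sum_mul]
    rw [hsum, one_mul]
  rw [this]
  simp_rw [← Finset.sum_add_distrib]
  refine Finset.sum_congr rfl fun i _ => Finset.sum_congr rfl fun j _ => ?_
  by_cases hp : p i j = 0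
  · simp [hp]
  have hD : (1 + ‖Y i - Y j‖ ^ 2) ≠ 0 := by positivity
  unfold tsneQ
  rw [Real.log_div hp (by positivity), Real.log_div (by positivity) hZ.ne', Real.log_inv]
  ring

theorem hasFDerivAt_KL {d n : ℕ} (hn : 2 ≤ n) (p : Fin n → Fin n → ℝ)
    (hsum : ∑ i, ∑ j ∈ univ.erase i, p i j = 1) (X : Fin n → EuclideanSpace ℝ (Fin d)) :
    HasFDerivAt (fun Y : Fin n → EuclideanSpace ℝ (Fin d) =>
      ∑ i, ∑ j ∈ univ.erase i, p i j * Real.log (p i j / tsneQ Y i j))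
      (∑ i, ∑ j ∈ univ.erase i,
        ((p i j - tsneQ X i j) * tsneQ X i j * tsneZ X) • dD X i j) X := by
  simp_rw [KL_eq hn p hsum]
  have hZ := tsneZ_pos' hn X
  have h1 : HasFDerivAt (fun Y : Fin n → EuclideanSpace ℝ (Fin d) =>
      ∑ i, ∑ j ∈ univ.erase i, p i j * Real.log (1 + ‖Y i - Y j‖ ^ 2))
      (∑ i, ∑ j ∈ univ.erase i, p i j • ((1 + ‖X i - X j‖ ^ 2)⁻¹ • dD X i j)) X := by
    refine HasFDerivAt.fun_sum fun i _ => HasFDerivAt.fun_sum fun j _ => ?_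
    exact ((hasFDerivAt_D X i j).log (by positivity)).const_mul _
  have h2 := (hasFDerivAt_Z X).log hZ.ne'
  refine ((h1.const_add _).add h2).congr_fderiv ?_
  simp_rw [Finset.smul_sum, ← Finset.sum_add_distrib]
  refine Finset.sum_congr rfl fun i _ => Finset.sum_congr rfl fun j _ => ?_
  have hD : (1 + ‖X i - X j‖ ^ 2) ≠ 0 := by positivity
  rw [smul_smul, smul_smul, ← add_smul]
  congr 1
  unfold tsneQ
  field_simp
  try ring

theorem tsneQ_symm {d n : ℕ} (X : Fin n → EuclideanSpace ℝ (Fin d)) (i j : Fin n) :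
    tsneQ X i j = tsneQ X j i := by
  unfold tsneQ
  rw [norm_sub_rev]

/-- For `n ≥ 2` and a fixed symmetric probability distribution `p` on ordered
pairs of distinct indices with zero diagonal, the Kullback–Leibler divergence
`KL(X) = Σ_{i≠j} p i j · log (p i j / q i j)` (with `q i j = w i j / Z`,
`w i j = (1 + ‖X i − X j‖²)⁻¹`, `Z = Σ_{k≠l} w k l`, and the convention `0·log 0 = 0`) is a
differentiable function of `X ∈ (ℝ^d)^n`, and for every index `m` its partial gradient with
respect to `X m` equals
`4·(Σ_{j≠m} p m j · q m j · Z · (X m − X j) − Σ_{j≠m} (q m j)² · Z · (X m − X j))`, i.e.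
`4 Σ_{j≠m} (p m j − q m j) · q m j · Z · (X m − X j)`. -/
theorem stmt_6 {d n : ℕ} (hn : 2 ≤ n) (p : Fin n → Fin n → ℝ)
    (hdiag : ∀ i, p i i = 0) (hsymm : ∀ i j, p i j = p j i)
    (hnonneg : ∀ i j, 0 ≤ p i j)
    (hsum : ∑ i, ∑ j ∈ univ.erase i, p i j = 1)
    (KL : (Fin n → EuclideanSpace ℝ (Fin d)) → ℝ)
    (hKL : ∀ Y : Fin n → EuclideanSpace ℝ (Fin d),
      KL Y = ∑ i, ∑ j ∈ univ.erase i, p i j * Real.log (p i j / tsneQ Y i j)) :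
    Differentiable ℝ KL ∧
    ∀ (X : Fin n → EuclideanSpace ℝ (Fin d)) (m : Fin n),
      gradient (fun y : EuclideanSpace ℝ (Fin d) => KL (Function.update X m y)) (X m)
        = (4 : ℝ) •
            ((∑ j ∈ univ.erase m, (p m j * tsneQ X m j * tsneZ X) • (X m - X j))
              - ∑ j ∈ univ.erase m, ((tsneQ X m j) ^ 2 * tsneZ X) • (X m - X j)) ∧
      gradient (fun y : EuclideanSpace ℝ (Fin d) => KL (Function.update X m y)) (X m)
        = (4 : ℝ) •
            ∑ j ∈ univ.erase m,
              ((p m j - tsneQ X m j) * tsneQ X m j * tsneZ X) • (X m - X j) := by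
  obtain rfl : KL = _ := funext hKL
  refine ⟨fun X => (hasFDerivAt_KL hn p hsum X).differentiableAt, fun X m => ?_⟩
  have key : gradient (fun y : EuclideanSpace ℝ (Fin d) =>
      ∑ i, ∑ j ∈ univ.erase i, p i j * Real.log (p i j / tsneQ (Function.update X m y) i j)) (X m)
        = (4 : ℝ) •
            ∑ j ∈ univ.erase m,
              ((p m j - tsneQ X m j) * tsneQ X m j * tsneZ X) • (X m - X j) := by
    apply HasGradientAt.gradient
    rw [hasGradientAt_iff_hasFDerivAt]
    have hK := hasFDerivAt_KL hn p hsum (Function.update X m (X m))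
    have hc := hK.comp (X m) (hasFDerivAt_update X (X m))
    refine hc.congr_fderiv ?_
    ext1 v
    rw [Function.update_eq_self]
    have hs : (ContinuousLinearMap.pi (Pi.single m (ContinuousLinearMap.id ℝ (EuclideanSpace ℝ (Fin d))))) v
        = (Pi.single m v : Fin n → EuclideanSpace ℝ (Fin d)) := by
      ext1 k
      by_cases hk : k = m
      · subst hk
        simp
      · simp [Pi.single_eq_of_ne hk]
    rw [ContinuousLinearMap.comp_apply, hs, InnerProductSpace.toDual_apply_apply,
      ← symm_sum (fun i j => (p i j - tsneQ X i j) * tsneQ X i j * tsneZ X)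
        (fun i j => by simp only [hsymm i j, tsneQ_symm X i j])]
    simp
  refine ⟨?_, key⟩
  rw [key, ← Finset.sum_sub_distrib]
  congr 1
  refine Finset.sum_congr rfl fun j _ => ?_
  rw [← sub_smul]
  congr 1
  ring
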